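/- Let B > 0, a > 0, p, ε ∈ ℝ, and define W : ℝ → ℝ by W(x) = B(x − a) for x > a, W(x) = 0 for −a ≤ x ≤ a, and W(x) = B(x + a) for x < −a. Let ψ : ℝ → ℝ be continuously differentiable and twice differentiable on ℝ ∖ {−a, a} with ψ''(x) = ((p + W(x))² − ε)ψ(x) for all x ∉ {−a, a}. Assume that x ↦ (p + W(x))ψ(x)² is Lebesgue integrable on ℝ and that ψ'(x)² − ((p + W(x))² − ε)ψ(x)² → 0 as x → ±∞. Then ∫_ℝ (p + W(x))ψ(x)² dx = p·∫_{−a}^{a} ψ(x)² dx. -/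

import Mathlib

open MeasureTheory Filter

/-!
On an interval where `W' = b`, the solutions of `ψ'' = ((p + W)² - ε) ψ` satisfy
`(ψ'² - ((p + W)² - ε) ψ²)' = -2 b (p + W) ψ²`. The bracket on the left is continuous on the whole
line, even where `b` jumps, and tends to the same limit at `±∞`, so `∫ b (p + W) ψ² = 0`. With `b`
equal to `B` off the screened region and to `0` on it, the complement of that region contributes
nothing to `∫ (p + W) ψ²`; on the strip itself `W = 0`.
-/

open Set Topology

theorem integral_of_hasDerivAt_off_countable_of_tendsto {F : Type*} [NormedAddCommGroup F]
    [NormedSpace ℝ F] [CompleteSpace F] {f f' : ℝ → F} {m n : F} {s : Set ℝ} (hs : s.Countable)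
    (hf : Continuous f) (hderiv : ∀ x ∉ s, HasDerivAt f (f' x) x) (hf' : Integrable f')
    (hbot : Tendsto f atBot (𝓝 m)) (htop : Tendsto f atTop (𝓝 n)) :
    ∫ x, f' x = n - m := by
  have h_ftc (r : ℝ) : ∫ x in -r..r, f' x = f r - f (-r) :=
    integral_eq_of_hasDerivAt_off_countable f f' hs hf.continuousOn
      (fun x hx ↦ hderiv x hx.2) hf'.intervalIntegrable
  have h_integral : Tendsto (fun r : ℝ ↦ ∫ x in -r..r, f' x) atTop (𝓝 (∫ x, f' x)) :=
    intervalIntegral_tendsto_integral hf' tendsto_neg_atTop_atBot tendsto_id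
  simp only [h_ftc] at h_integral
  exact tendsto_nhds_unique h_integral (htop.sub (hbot.comp tendsto_neg_atTop_atBot))

section SpatialEnergy

variable {E : Type*} [NormedAddCommGroup E] [InnerProductSpace ℝ E]
  {u : ℝ → E} {V V' : ℝ → ℝ} {s : Set ℝ} {x : ℝ}

/-- The mechanical energy of a solution of `u'' = V u` when `x` is read as time. It is conserved
where `V` is constant. The eigenvalue is absorbed into `V`. -/
noncomputable def spatialEnergy (V : ℝ → ℝ) (u : ℝ → E) (x : ℝ) : ℝ :=
  ‖deriv u x‖ ^ 2 - V x * ‖u x‖ ^ 2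

theorem spatialEnergy_real (V f : ℝ → ℝ) :
    spatialEnergy V f = fun x ↦ deriv f x ^ 2 - V x * f x ^ 2 := by
  simp only [funext_iff, spatialEnergy, Real.norm_eq_abs, sq_abs, implies_true]

theorem continuous_spatialEnergy (hV : Continuous V) (hu : ContDiff ℝ 1 u) :
    Continuous (spatialEnergy V u) :=
  (hu.continuous_deriv_one.norm.pow 2).sub (hV.mul (hu.continuous.norm.pow 2))

theorem hasDerivAt_spatialEnergy {v : ℝ} (hV : HasDerivAt V v x) (hu : DifferentiableAt ℝ u x)
    (hode : HasDerivAt (deriv u) (V x • u x) x) :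
    HasDerivAt (spatialEnergy V u) (-(v * ‖u x‖ ^ 2)) x := by
  refine (hode.norm_sq.sub (hV.mul hu.hasDerivAt.norm_sq)).congr_deriv ?_
  rw [inner_smul_right, real_inner_comm]
  ring

theorem integral_deriv_mul_norm_sq_eq_sub {m n : ℝ} (hs : s.Countable) (hV : Continuous V)
    (hV' : ∀ x ∉ s, HasDerivAt V (V' x) x) (hu : ContDiff ℝ 1 u)
    (hode : ∀ x ∉ s, HasDerivAt (deriv u) (V x • u x) x)
    (hint : Integrable fun x ↦ V' x * ‖u x‖ ^ 2)
    (hbot : Tendsto (spatialEnergy V u) atBot (𝓝 m))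
    (htop : Tendsto (spatialEnergy V u) atTop (𝓝 n)) :
    ∫ x, V' x * ‖u x‖ ^ 2 = m - n := by
  have h_energy : ∫ x, -(V' x * ‖u x‖ ^ 2) = n - m :=
    integral_of_hasDerivAt_off_countable_of_tendsto hs (continuous_spatialEnergy hV hu)
      (fun x hx ↦ hasDerivAt_spatialEnergy (hV' x hx) (hu.differentiable one_ne_zero x)
        (hode x hx)) hint.neg hbot htop
  rw [integral_neg] at h_energy
  linarith

end SpatialEnergy

section Screening

variable {E : Type*} [NormedAddCommGroup E] [InnerProductSpace ℝ E] {ψ : ℝ → E} {B p ε l : ℝ}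

theorem integral_momentum_mul_norm_sq_eq_setIntegral {W : ℝ → ℝ} {K : Set ℝ} (hB : B ≠ 0)
    (hK : (frontier K).Countable) (hW : Continuous W)
    (hW_screened : ∀ x ∈ interior K, HasDerivAt W 0 x)
    (hW_field : ∀ x ∈ interior Kᶜ, HasDerivAt W B x) (hψ : ContDiff ℝ 1 ψ)
    (hode : ∀ x ∉ frontier K, HasDerivAt (deriv ψ) (((p + W x) ^ 2 - ε) • ψ x) x)
    (hint : Integrable fun x ↦ (p + W x) * ‖ψ x‖ ^ 2)
    (htop : Tendsto (spatialEnergy (fun x ↦ (p + W x) ^ 2 - ε) ψ) atTop (𝓝 l))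
    (hbot : Tendsto (spatialEnergy (fun x ↦ (p + W x) ^ 2 - ε) ψ) atBot (𝓝 l)) :
    ∫ x, (p + W x) * ‖ψ x‖ ^ 2 = ∫ x in K, (p + W x) * ‖ψ x‖ ^ 2 := by
  have hK_meas : NullMeasurableSet K := nullMeasurableSet_of_null_frontier (hK.measure_zero _)
  set b : ℝ → ℝ := Kᶜ.indicator fun _ ↦ B with hb
  have hW_deriv : ∀ x ∉ frontier K, HasDerivAt W (b x) x := by
    intro x hx
    rw [← mem_compl_iff, compl_frontier_eq_union_interior] at hx
    rcases hx with hx | hx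
    · simpa [hb, interior_subset hx] using hW_screened x hx
    · rw [hb, indicator_of_mem (interior_subset hx)]
      exact hW_field x hx
  have hV_deriv : ∀ x ∉ frontier K,
      HasDerivAt (fun y ↦ (p + W y) ^ 2 - ε) (2 * (p + W x) * b x) x := fun x hx ↦ by
    simpa using (((hW_deriv x hx).const_add p).pow 2).sub_const ε
  have h_indicator : (fun x ↦ 2 * (p + W x) * b x * ‖ψ x‖ ^ 2) =
      Kᶜ.indicator fun x ↦ 2 * B * ((p + W x) * ‖ψ x‖ ^ 2) := by
    ext x
    by_cases hx : x ∈ K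
    · simp [hb, hx]
    · simp only [hb, mem_compl_iff, hx, not_false_eq_true, indicator_of_mem]
      ring
  have h_force : ∫ x, 2 * (p + W x) * b x * ‖ψ x‖ ^ 2 = l - l :=
    integral_deriv_mul_norm_sq_eq_sub hK (by fun_prop) hV_deriv hψ hode
      (h_indicator ▸ (hint.const_mul _).indicator₀ hK_meas.compl) hbot htop
  rw [h_indicator, integral_indicator₀ hK_meas.compl, integral_const_mul, sub_self] at h_force
  have h_compl : ∫ x in Kᶜ, (p + W x) * ‖ψ x‖ ^ 2 = 0 :=
    (mul_eq_zero.mp h_force).resolve_left (mul_ne_zero two_ne_zero hB)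
  rw [← integral_add_compl₀ hK_meas hint, h_compl, add_zero]

/-- The vector potential of the magnetic field `B` off `[α, β]`, perfectly screened on `[α, β]`,
in the gauge vanishing there: `B` times the displacement of `x` from its nearest point of
`[α, β]`. -/
def screenedPotential (B α β x : ℝ) : ℝ :=
  B * (x - max α (min β x))

variable {α β x : ℝ}

theorem continuous_screenedPotential : Continuous (screenedPotential B α β) := by
  unfold screenedPotential
  fun_prop

theorem screenedPotential_of_mem_Icc (hx : x ∈ Icc α β) : screenedPotential B α β x = 0 := by
  rw [screenedPotential, min_eq_right hx.2, max_eq_right hx.1, sub_self, mul_zero]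

theorem screenedPotential_of_le_left (hαβ : α ≤ β) (hx : x ≤ α) :
    screenedPotential B α β x = B * (x - α) := by
  rw [screenedPotential, min_eq_right (hx.trans hαβ), max_eq_left hx]

theorem screenedPotential_of_right_le (hαβ : α ≤ β) (hx : β ≤ x) :
    screenedPotential B α β x = B * (x - β) := by
  rw [screenedPotential, min_eq_left hx, max_eq_right hαβ]

theorem eq_screenedPotential {W : ℝ → ℝ} (hαβ : α ≤ β) (hW_right : ∀ x, β < x → W x = B * (x - β))
    (hW_mid : ∀ x ∈ Icc α β, W x = 0) (hW_left : ∀ x, x < α → W x = B * (x - α)) :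
    W = screenedPotential B α β := by
  ext x
  rcases lt_or_ge x α with hxα | hαx
  · rw [hW_left x hxα, screenedPotential_of_le_left hαβ hxα.le]
  rcases lt_or_ge β x with hβx | hxβ
  · rw [hW_right x hβx, screenedPotential_of_right_le hαβ hβx.le]
  · rw [hW_mid x ⟨hαx, hxβ⟩, screenedPotential_of_mem_Icc ⟨hαx, hxβ⟩]

theorem hasDerivAt_screenedPotential_of_mem_Ioo (hx : x ∈ Ioo α β) :
    HasDerivAt (screenedPotential B α β) 0 x := by
  refine (hasDerivAt_const x (0 : ℝ)).congr_of_eventuallyEq ?_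
  filter_upwards [Icc_mem_nhds hx.1 hx.2] with y hy using screenedPotential_of_mem_Icc hy

theorem hasDerivAt_screenedPotential_of_notMem_Icc (hαβ : α ≤ β) (hx : x ∉ Icc α β) :
    HasDerivAt (screenedPotential B α β) B x := by
  have h_affine (c : ℝ) : HasDerivAt (fun y ↦ B * (y - c)) B x := by
    simpa using ((hasDerivAt_id x).sub_const c).const_mul B
  rcases lt_or_ge x α with hxα | hαx
  · refine (h_affine α).congr_of_eventuallyEq ?_
    filter_upwards [Iio_mem_nhds hxα] with y hy using screenedPotential_of_le_left hαβ hy.le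
  · have hβx : β < x := not_le.mp fun hxβ ↦ hx ⟨hαx, hxβ⟩
    refine (h_affine β).congr_of_eventuallyEq ?_
    filter_upwards [Ioi_mem_nhds hβx] with y hy using screenedPotential_of_right_le hαβ hy.le

theorem stmt_17_general (hB : B ≠ 0) (hαβ : α ≤ β) (hψ : ContDiff ℝ 1 ψ)
    (hode : ∀ x, x ≠ α → x ≠ β →
      HasDerivAt (deriv ψ) (((p + screenedPotential B α β x) ^ 2 - ε) • ψ x) x)
    (hint : Integrable fun x ↦ (p + screenedPotential B α β x) * ‖ψ x‖ ^ 2)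
    (htop : Tendsto (spatialEnergy (fun x ↦ (p + screenedPotential B α β x) ^ 2 - ε) ψ)
      atTop (𝓝 l))
    (hbot : Tendsto (spatialEnergy (fun x ↦ (p + screenedPotential B α β x) ^ 2 - ε) ψ)
      atBot (𝓝 l)) :
    ∫ x, (p + screenedPotential B α β x) * ‖ψ x‖ ^ 2 = p * ∫ x in α..β, ‖ψ x‖ ^ 2 := by
  have h_frontier : frontier (Icc α β) = {α, β} := frontier_Icc hαβ
  calc
    _ = ∫ x in Icc α β, (p + screenedPotential B α β x) * ‖ψ x‖ ^ 2 := by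
      refine integral_momentum_mul_norm_sq_eq_setIntegral hB (h_frontier ▸ to_countable _)
        continuous_screenedPotential (fun x hx ↦ ?_) (fun x hx ↦ ?_) hψ (fun x hx ↦ ?_)
        hint htop hbot
      · exact hasDerivAt_screenedPotential_of_mem_Ioo (interior_Icc (a := α) (b := β) ▸ hx)
      · exact hasDerivAt_screenedPotential_of_notMem_Icc hαβ (interior_subset hx)
      · simp only [h_frontier, mem_insert_iff, mem_singleton_iff, not_or] at hx
        exact hode x hx.1 hx.2
    _ = ∫ x in Icc α β, p * ‖ψ x‖ ^ 2 :=
      setIntegral_congr_fun measurableSet_Icc fun x hx ↦ by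
        simp only [screenedPotential_of_mem_Icc hx, add_zero]
    _ = p * ∫ x in α..β, ‖ψ x‖ ^ 2 := by
      rw [integral_const_mul, integral_Icc_eq_integral_Ioc, intervalIntegral.integral_of_le hαβ]

end Screening

/-- Ideal screened-strip model: the Feynman–Hellmann integral equals
p·∫₋ₐᵃ ψ², so the band functions have their only stationary point at p = 0. -/
theorem stmt_17 (B a p ε : ℝ) (hB : 0 < B) (ha : 0 < a)
    (W : ℝ → ℝ)
    (hW_right : ∀ x : ℝ, a < x → W x = B * (x - a))
    (hW_mid : ∀ x ∈ Set.Icc (-a) a, W x = 0)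
    (hW_left : ∀ x : ℝ, x < -a → W x = B * (x + a))
    (ψ : ℝ → ℝ) (hψ : ContDiff ℝ 1 ψ)
    (hψ'' : ∀ x : ℝ, x ≠ -a → x ≠ a → DifferentiableAt ℝ (deriv ψ) x)
    (hode : ∀ x : ℝ, x ≠ -a → x ≠ a →
      deriv (deriv ψ) x = ((p + W x) ^ 2 - ε) * ψ x)
    (hint : Integrable (fun x : ℝ => (p + W x) * ψ x ^ 2) volume)
    (htop : Tendsto (fun x : ℝ =>
        (deriv ψ x) ^ 2 - ((p + W x) ^ 2 - ε) * ψ x ^ 2) atTop (nhds 0))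
    (hbot : Tendsto (fun x : ℝ =>
        (deriv ψ x) ^ 2 - ((p + W x) ^ 2 - ε) * ψ x ^ 2) atBot (nhds 0)) :
    ∫ x : ℝ, (p + W x) * ψ x ^ 2 = p * ∫ x in (-a)..a, ψ x ^ 2 := by
  have h_strip : -a ≤ a := by linarith
  obtain rfl : W = screenedPotential B (-a) a :=
    eq_screenedPotential h_strip hW_right hW_mid (by simpa only [sub_neg_eq_add] using hW_left)
  simpa only [Real.norm_eq_abs, sq_abs] using stmt_17_general hB.ne' h_strip hψ
    (fun x hx_left hx_right ↦ (hψ'' x hx_left hx_right).hasDerivAt.congr_deriv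
      (hode x hx_left hx_right))
    (by simpa only [Real.norm_eq_abs, sq_abs] using hint)
    (spatialEnergy_real _ ψ ▸ htop) (spatialEnergy_real _ ψ ▸ hbot)
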